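/- Let α, β, γ ∈ ℂ with α+β ∉ ℤ and γ ∉ ℤ, and let X, Y, Z be nonnegative integers. Then ∑ (−1)^{i+j+k+l+m} · ((β)_n (γ)_n / (n! (α+β)_n)) · C(−γ−n, i) · C(−β−n, j) · C(α+β+n−1, k) · C(γ−α, l) · C(n, m) = (α)_X (β)_Y (1−γ)_Z (γ)_{X+Y−Z} / (X! · Y! · Z! · (α+β)_{X+Y−Z}), where the (finite) sum ranges over all nonnegative integers i, j, k, l, m, n satisfying i+l+m = X, j+n−m = Y and j+k+l = Z. -/

import Mathlib

open Finset

/-- Pochhammer symbol `(a)_k` for complex `a` and integer `k`. -/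
noncomputable def cpoch (a : ℂ) (k : ℤ) : ℂ :=
  if 0 ≤ k then ∏ i ∈ Finset.range k.toNat, (a + (i : ℂ))
  else (∏ i ∈ Finset.range (-k).toNat, (a + (k : ℂ) + (i : ℂ)))⁻¹

/-- Generalized binomial coefficient `C(a, r) = a(a-1)⋯(a-r+1)/r!`. -/
noncomputable def genBinom (a : ℂ) (r : ℕ) : ℂ :=
  (∏ i ∈ Finset.range r, (a - (i : ℂ))) / (r.factorial : ℂ)

/-- Rising factorial with natural index. -/
noncomputable def risP (a : ℂ) (n : ℕ) : ℂ := ∏ i ∈ Finset.range n, (a + (i : ℂ))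

lemma cpoch_nat (a : ℂ) (n : ℕ) : cpoch a (n : ℤ) = risP a n := by
  simp [cpoch, risP]

lemma risP_succ (a : ℂ) (n : ℕ) : risP a (n + 1) = risP a n * (a + n) := by
  simp [risP, Finset.prod_range_succ]

lemma risP_add (a : ℂ) (m n : ℕ) : risP a (m + n) = risP a m * risP (a + m) n := by
  simp [risP, Finset.prod_range_add, add_assoc]

lemma risP_succ' (a : ℂ) (n : ℕ) : risP a (n + 1) = a * risP (a + 1) n := by
  rw [add_comm, risP_add]; simp [risP]

lemma fact_ne (n : ℕ) : (n.factorial : ℂ) ≠ 0 := by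
  exact_mod_cast n.factorial_ne_zero

lemma neg_one_sq_pow (n : ℕ) : ((-1 : ℂ) ^ n) * (-1) ^ n = 1 := by
  rw [← mul_pow]; simp

lemma cpoch_step (a : ℂ) (ha : ∀ n : ℤ, a ≠ (n : ℂ)) (k : ℤ) :
    cpoch a (k + 1) = cpoch a k * (a + k) := by
  rcases le_or_gt 0 k with h | h
  · obtain ⟨n, rfl⟩ := Int.eq_ofNat_of_zero_le h
    have : ((n : ℤ) + 1) = ((n + 1 : ℕ) : ℤ) := by push_cast; rfl
    rw [this, cpoch_nat, cpoch_nat, risP_succ]; simp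
  · obtain ⟨n, rfl⟩ : ∃ n : ℕ, k = -((n : ℤ) + 1) := ⟨(-k - 1).toNat, by omega⟩
    have key : ∀ n : ℕ, cpoch a (-(n : ℤ)) = (risP (a - n) n)⁻¹ := by
      intro n
      rcases Nat.eq_zero_or_pos n with rfl | hn
      · simp [cpoch, risP]
      · have : ¬ (0 ≤ -(n : ℤ)) := by omega
        simp [cpoch, risP, sub_eq_add_neg]
        intro h0; omega
    have e1 : -((n : ℤ) + 1) + 1 = -(n : ℤ) := by ring
    have e2 : -((n : ℤ) + 1) = -((n + 1 : ℕ) : ℤ) := by push_cast; ring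
    rw [e1, e2, key, key, risP_succ']
    have e3 : a - ((n + 1 : ℕ) : ℂ) + 1 = a - n := by push_cast; ring
    rw [e3]
    have hne : a - ((n + 1 : ℕ) : ℂ) ≠ 0 := by
      have := ha (n + 1)
      push_cast at this ⊢
      exact sub_ne_zero.mpr this
    have e4 : a + ((-((n + 1 : ℕ) : ℤ) : ℤ) : ℂ) = a - ((n + 1 : ℕ) : ℂ) := by
      push_cast; ring
    rw [e4, mul_inv, mul_comm, ← mul_assoc, mul_inv_cancel₀ hne, one_mul]

lemma cpoch_add (a : ℂ) (ha : ∀ n : ℤ, a ≠ (n : ℂ)) (k : ℤ) (n : ℕ) :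
    cpoch a (k + n) = cpoch a k * risP (a + k) n := by
  induction n with
  | zero => simp [risP]
  | succ n ih =>
    have : k + ((n + 1 : ℕ) : ℤ) = (k + n) + 1 := by push_cast; ring
    rw [this, cpoch_step a ha, ih, risP_succ]; push_cast; ring

lemma add_int_ne (a : ℂ) (ha : ∀ n : ℤ, a ≠ (n : ℂ)) (k : ℤ) : a + k ≠ 0 := by
  intro h
  apply ha (-k)
  push_cast
  linear_combination h

lemma cpoch_ne (a : ℂ) (ha : ∀ n : ℤ, a ≠ (n : ℂ)) (k : ℤ) : cpoch a k ≠ 0 := by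
  unfold cpoch
  split_ifs
  · refine Finset.prod_ne_zero_iff.mpr fun i _ => ?_
    exact_mod_cast add_int_ne a ha i
  · refine inv_ne_zero (Finset.prod_ne_zero_iff.mpr fun i _ => ?_)
    have := add_int_ne a ha (k + i)
    push_cast at this
    rwa [← add_assoc] at this

lemma genBinom_neg (a : ℂ) (n : ℕ) :
    genBinom (-a) n = (-1) ^ n * risP a n / (n.factorial : ℂ) := by
  unfold genBinom risP
  congr 1
  have h : ((-1 : ℂ)) ^ n = ∏ _i ∈ Finset.range n, (-1 : ℂ) := by simp
  rw [h, ← Finset.prod_mul_distrib]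
  exact Finset.prod_congr rfl fun i _ => by ring

lemma genBinom_ris (a : ℂ) (n : ℕ) :
    genBinom (a + n - 1) n = risP a n / (n.factorial : ℂ) := by
  unfold genBinom risP
  congr 1
  rw [← Finset.prod_range_reflect]
  refine Finset.prod_congr rfl fun i hi => ?_
  have : n - 1 - i + i + 1 = n := by have := Finset.mem_range.mp hi; omega
  have h : ((n - 1 - i : ℕ) : ℂ) + i + 1 = n := by exact_mod_cast this
  linear_combination -h

lemma genBinom_eq_choose (a : ℂ) (n : ℕ) : genBinom a n = Ring.choose a n := by
  rw [Ring.choose_eq_smul, genBinom, smul_eq_mul, div_eq_inv_mul]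
  congr 1
  induction n with
  | zero => simp [descPochhammer_zero]
  | succ n ih =>
    rw [Finset.prod_range_succ, ih, descPochhammer_succ_right, Polynomial.smeval_mul]
    simp [Polynomial.smeval_sub, Polynomial.smeval_natCast]

lemma genBinom_nat (n k : ℕ) : genBinom (n : ℂ) k = (n.choose k : ℂ) := by
  rw [genBinom_eq_choose, Ring.choose_natCast]

lemma genBinom_fact (p q : ℕ) :
    genBinom ((p + q : ℕ) : ℂ) p
      = ((p + q).factorial : ℂ) / ((p.factorial : ℂ) * (q.factorial : ℂ)) := by
  rw [genBinom_nat, Nat.choose_symm_add, Nat.add_choose, Nat.cast_div (Nat.factorial_mul_factorial_dvd_factorial_add p q)]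
  · push_cast; rfl
  · push_cast
    exact mul_ne_zero (fact_ne _) (fact_ne _)

lemma vand (a b : ℂ) (n : ℕ) :
    ∑ m ∈ Finset.range (n + 1), genBinom a m * genBinom b (n - m) = genBinom (a + b) n := by
  rw [genBinom_eq_choose, Ring.add_choose_eq n (Commute.all a b),
    Finset.Nat.sum_antidiagonal_eq_sum_range_succ (fun i j => Ring.choose a i * Ring.choose b j)]
  simp [genBinom_eq_choose]

lemma trinom (a : ℂ) (p q : ℕ) :
    genBinom a p * genBinom (a - p) q = genBinom a (p + q) * genBinom ((p + q : ℕ) : ℂ) p := by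
  rw [genBinom_fact]
  unfold genBinom
  rw [Finset.prod_range_add]
  have h1 := fact_ne p
  have h2 := fact_ne q
  have h3 := fact_ne (p + q)
  have : ∏ x ∈ Finset.range q, (a - ((p + x : ℕ) : ℂ)) = ∏ x ∈ Finset.range q, (a - p - x) :=
    Finset.prod_congr rfl fun i _ => by push_cast; ring
  rw [this]
  field_simp

lemma saal (α γ : ℂ) (X Z : ℕ) :
    ∑ l ∈ Finset.range (min X Z + 1),
      genBinom (γ - α) l * genBinom (α + X - Z - 1) (X - l) *
        genBinom (γ + X - l - 1) (Z - l)
      = genBinom (α + X - 1) X * genBinom (γ - 1) Z := by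
  set A : ℂ := α + X - Z - 1 with hA
  -- inner expansion
  have inner : ∀ l ∈ Finset.range (min X Z + 1),
      genBinom (γ - α) l * genBinom A (X - l) * genBinom (γ + X - l - 1) (Z - l)
      = ∑ s ∈ Finset.Icc l (min X Z), genBinom (γ - α) l * genBinom A (X - s) *
          genBinom (A - X + s) (s - l) * genBinom (γ - 1) (Z - s) := by
    intro l hl
    have hl' : l ≤ min X Z := by have := Finset.mem_range.mp hl; omega
    have hX : l ≤ X := by omega
    have hZ : l ≤ Z := by omega
    have e : γ + X - l - 1 = ((X - l : ℕ) : ℂ) + (γ - 1) := by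
      push_cast [hX]; ring
    rw [e, ← vand, Finset.mul_sum]
    have : ∑ s ∈ Finset.Icc l (min X Z), genBinom (γ - α) l * genBinom A (X - s) *
          genBinom (A - X + s) (s - l) * genBinom (γ - 1) (Z - s)
        = ∑ s ∈ Finset.Icc l (min X Z), genBinom (γ - α) l * genBinom A (X - l) *
            (genBinom ((X - l : ℕ) : ℂ) (s - l) * genBinom (γ - 1) (Z - s)) := by
      refine Finset.sum_congr rfl fun s hs => ?_
      have hs' := Finset.mem_Icc.mp hs
      obtain ⟨p, rfl⟩ := Nat.exists_eq_add_of_le hs'.1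
      obtain ⟨q, hq⟩ := Nat.exists_eq_add_of_le (show l + p ≤ X by omega)
      have t := trinom A q p
      have t2 : genBinom ((q + p : ℕ) : ℂ) q = genBinom ((q + p : ℕ) : ℂ) p := by
        rw [genBinom_nat, genBinom_nat, Nat.choose_symm_add]
      rw [t2] at t
      have e1 : X - (l + p) = q := by omega
      have e2 : l + p - l = p := by omega
      have e3 : X - l = q + p := by omega
      have e4 : A - X + ((l + p : ℕ) : ℂ) = A - q := by
        rw [hq]; push_cast; ring
      rw [e1, e2, e3, e4]
      linear_combination (genBinom (γ - α) l * genBinom (γ - 1) (Z - (l + p))) * t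
    rw [this]
    have ext : ∑ s ∈ Finset.Icc l (min X Z), genBinom (γ - α) l * genBinom A (X - l) *
            (genBinom ((X - l : ℕ) : ℂ) (s - l) * genBinom (γ - 1) (Z - s))
        = ∑ s ∈ Finset.Ico l (Z + 1), genBinom (γ - α) l * genBinom A (X - l) *
            (genBinom ((X - l : ℕ) : ℂ) (s - l) * genBinom (γ - 1) (Z - s)) := by
      apply Finset.sum_subset
      · intro s hs
        simp only [Finset.mem_Icc, Finset.mem_Ico] at *
        omega
      · intro s hs hs2
        simp only [Finset.mem_Icc, Finset.mem_Ico] at *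
        rw [genBinom_nat, Nat.choose_eq_zero_of_lt (by omega)]
        simp
    rw [ext, Finset.sum_Ico_eq_sum_range]
    have e5 : Z + 1 - l = Z - l + 1 := by omega
    rw [e5]
    refine Finset.sum_congr rfl fun p _ => ?_
    have e6 : l + p - l = p := by omega
    have e7 : Z - (l + p) = Z - l - p := by omega
    rw [e6, e7]
  rw [Finset.sum_congr rfl inner]
  rw [Finset.sum_comm' (t' := Finset.range (min X Z + 1)) (s' := fun s => Finset.range (s + 1))
    (by intro x y; simp only [Finset.mem_range, Finset.mem_Icc]; omega)]
  have e : α + X - 1 = (Z : ℂ) + A := by rw [hA]; ring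
  rw [e, ← vand, Finset.sum_mul]
  have ext : ∑ s ∈ Finset.range (X + 1), genBinom (Z : ℂ) s * genBinom A (X - s) * genBinom (γ - 1) Z
      = ∑ s ∈ Finset.range (min X Z + 1),
          genBinom (Z : ℂ) s * genBinom A (X - s) * genBinom (γ - 1) Z := by
    symm
    apply Finset.sum_subset
    · intro s hs
      simp only [Finset.mem_range] at *
      omega
    · intro s hs hs2
      simp only [Finset.mem_range] at *
      rw [genBinom_nat, Nat.choose_eq_zero_of_lt (by omega)]
      simp
  rw [ext]
  refine Finset.sum_congr rfl fun s hs => ?_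
  have hs' : s ≤ min X Z := by have := Finset.mem_range.mp hs; omega
  obtain ⟨q, hq⟩ := Nat.exists_eq_add_of_le (show s ≤ Z by omega)
  have t := trinom (γ - 1) q s
  have t2 : genBinom ((q + s : ℕ) : ℂ) q = genBinom ((q + s : ℕ) : ℂ) s := by
    rw [genBinom_nat, genBinom_nat, Nat.choose_symm_add]
  rw [t2] at t
  have e1 : Z - s = q := by omega
  have e2 : Z = q + s := by omega
  have v := vand (γ - α) (A - X + s) s
  have e3 : γ - α + (A - X + s) = γ - 1 - q := by
    rw [hA, e2]; push_cast; ring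
  rw [e3] at v
  rw [e1]
  calc _ = (∑ m ∈ Finset.range (s + 1), genBinom (γ - α) m * genBinom (A - X + s) (s - m)) *
        (genBinom A (X - s) * genBinom (γ - 1) q) := by
        rw [Finset.sum_mul]
        exact Finset.sum_congr rfl fun _ _ => by ring
    _ = _ := by
        rw [← e2] at t
        rw [v]
        linear_combination genBinom A (X - s) * t

lemma term_eq (α β γ : ℂ) (hc : ∀ n : ℤ, α + β ≠ (n : ℂ)) (l m i j k y : ℕ) :
    (-1 : ℂ) ^ (i + j + k + l + m) *
            (cpoch β ((y + m : ℕ) : ℤ) * cpoch γ ((y + m : ℕ) : ℤ) /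
              (((y + m).factorial : ℂ) * cpoch (α + β) ((y + m : ℕ) : ℤ))) *
            genBinom (-γ - ((y + m : ℕ) : ℂ)) i * genBinom (-β - ((y + m : ℕ) : ℂ)) j *
            genBinom (α + β + ((y + m : ℕ) : ℂ) - 1) k * genBinom (γ - α) l *
            genBinom ((y + m : ℕ) : ℂ) m
    = (-1) ^ (l + j + k + (j + y)) * (cpoch (α + β) (m + i + y - k))⁻¹ * risP β (j + y) *
      (risP γ (m + i) / ((j + k).factorial : ℂ) * genBinom (γ - α) l) *
      ((genBinom (-β - ((j + y : ℕ) : ℂ)) m *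
        genBinom (α + β + ((m + i : ℕ) : ℂ) + (y : ℂ) - k - 1) i) *
      (genBinom ((j + k : ℕ) : ℂ) j * genBinom (-γ - ((m + i : ℕ) : ℂ)) y)) := by
  set c := α + β with hcdef
  set n := y + m with hn
  have f1 : genBinom (-γ - (n : ℂ)) i = (-1) ^ i * risP (γ + n) i / (i.factorial : ℂ) := by
    rw [← genBinom_neg]; congr 1; ring
  have f2 : genBinom (-β - (n : ℂ)) j = (-1) ^ j * risP (β + n) j / (j.factorial : ℂ) := by
    rw [← genBinom_neg]; congr 1; ring
  have f3 : genBinom (c + n - 1) k = risP (c + n - k) k / (k.factorial : ℂ) := by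
    rw [← genBinom_ris]; congr 1; ring
  have f4 : genBinom (n : ℂ) m
      = (n.factorial : ℂ) / ((m.factorial : ℂ) * (y.factorial : ℂ)) := by
    rw [hn, add_comm y m, genBinom_fact]
  have f5 : genBinom (-β - ((j + y : ℕ) : ℂ)) m
      = (-1) ^ m * risP (β + (j + y : ℕ)) m / (m.factorial : ℂ) := by
    rw [← genBinom_neg]; congr 1; ring
  have f6 : genBinom (c + ((m + i : ℕ) : ℂ) + (y : ℂ) - k - 1) i
      = risP (c + n - k) i / (i.factorial : ℂ) := by
    rw [← genBinom_ris]; congr 1; rw [hn]; push_cast; ring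
  have f7 := genBinom_fact j k
  have f8 : genBinom (-γ - ((m + i : ℕ) : ℂ)) y
      = (-1) ^ y * risP (γ + (m + i : ℕ)) y / (y.factorial : ℂ) := by
    rw [← genBinom_neg]; congr 1; ring
  have g1 : risP γ n * risP (γ + n) i = risP γ (m + i) * risP (γ + (m + i : ℕ)) y := by
    rw [← risP_add, ← risP_add]; congr 1; omega
  have g2 : risP β n * risP (β + n) j = risP β (j + y) * risP (β + (j + y : ℕ)) m := by
    rw [← risP_add, ← risP_add]; congr 1; omega
  have g3 : cpoch c n = cpoch c ((n : ℤ) - k) * risP (c + n - k) k := by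
    have := cpoch_add c hc ((n : ℤ) - k) k
    push_cast at this
    rw [sub_add_cancel] at this
    rw [this]; congr 2; ring
  have g4 : cpoch c (m + i + y - k) = cpoch c ((n : ℤ) - k) * risP (c + n - k) i := by
    have := cpoch_add c hc ((n : ℤ) - k) i
    push_cast at this
    have e : (m : ℤ) + i + y - k = (n : ℤ) - k + i := by rw [hn]; push_cast; ring
    rw [e, this]; congr 2; ring
  have n3 := cpoch_ne c hc n
  have n4 := cpoch_ne c hc (m + i + y - k)
  rw [f1, f2, f3, f4, f5, f6, f7, f8, cpoch_nat β, cpoch_nat γ, g4]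
  rw [g4] at n4
  rw [g3] at n3 ⊢
  have a1 := left_ne_zero_of_mul n3
  have a2 := right_ne_zero_of_mul n3
  have a3 := right_ne_zero_of_mul n4
  have b1 := fact_ne i
  have b2 := fact_ne j
  have b3 := fact_ne k
  have b4 := fact_ne m
  have b5 := fact_ne n
  have b6 := fact_ne y
  have b7 := fact_ne (j + k)
  have si := neg_one_sq_pow i
  have sj := neg_one_sq_pow j
  have sy := neg_one_sq_pow y
  have L : (-1 : ℂ) ^ (i + j + k + l + m) *
        (risP β n * risP γ n / ((n.factorial : ℂ) * (cpoch c (n - k) * risP (c + n - k) k))) *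
        ((-1) ^ i * risP (γ + n) i / (i.factorial : ℂ)) *
        ((-1) ^ j * risP (β + n) j / (j.factorial : ℂ)) *
        (risP (c + n - k) k / (k.factorial : ℂ)) * genBinom (γ - α) l *
        ((n.factorial : ℂ) / ((m.factorial : ℂ) * (y.factorial : ℂ)))
      = (-1) ^ (k + l + m) * (((-1) ^ i * (-1) ^ i) * ((-1) ^ j * (-1) ^ j)) *
        (risP γ n * risP (γ + n) i) * (risP β n * risP (β + n) j) * genBinom (γ - α) l /
        (cpoch c (n - k) * (i.factorial : ℂ) * (j.factorial : ℂ) * (k.factorial : ℂ) *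
          (m.factorial : ℂ) * (y.factorial : ℂ)) := by
    field_simp
    ring
  rw [L, g1, g2, si, sj]
  have R : (-1 : ℂ) ^ (l + j + k + (j + y)) * (cpoch c (n - k) * risP (c + n - k) i)⁻¹ *
        risP β (j + y) *
        (risP γ (m + i) / ((j + k).factorial : ℂ) * genBinom (γ - α) l) *
        ((-1) ^ m * risP (β + (j + y : ℕ)) m / (m.factorial : ℂ) *
          (risP (c + n - k) i / (i.factorial : ℂ)) *
        (((j + k).factorial : ℂ) / ((j.factorial : ℂ) * (k.factorial : ℂ)) *
          ((-1) ^ y * risP (γ + (m + i : ℕ)) y / (y.factorial : ℂ))))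
      = (-1) ^ (k + l + m) * (((-1) ^ y * (-1) ^ y) * ((-1) ^ j * (-1) ^ j)) *
        (risP γ (m + i) * risP (γ + (m + i : ℕ)) y) *
        (risP β (j + y) * risP (β + (j + y : ℕ)) m) * genBinom (γ - α) l /
        (cpoch c (n - k) * (i.factorial : ℂ) * (j.factorial : ℂ) * (k.factorial : ℂ) *
          (m.factorial : ℂ) * (y.factorial : ℂ)) := by
    field_simp
    ring
  rw [R, sy, sj]

/-- The index set of the nonvanishing terms, parametrised by `(l, (m, j))`. -/
def idxT (X Y Z : ℕ) : Finset (Σ _ : ℕ, ℕ × ℕ) :=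
  (Finset.range (min X Z + 1)).sigma fun l =>
    (Finset.range (X - l + 1)) ×ˢ ((Finset.range (Y + 1)).filter (fun j => j ≤ Z - l))

/-- The full index from `(l, (m, j))`. -/
def idxMap (X Y Z : ℕ) (t : Σ _ : ℕ, ℕ × ℕ) : ℕ × ℕ × ℕ × ℕ × ℕ × ℕ :=
  (X - t.1 - t.2.1, t.2.2, Z - t.1 - t.2.2, t.1, t.2.1, Y - t.2.2 + t.2.1)

lemma idxMap_inj (X Y Z : ℕ) : Function.Injective (idxMap X Y Z) := by
  rintro ⟨l, m, j⟩ ⟨l', m', j'⟩ h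
  simp only [idxMap, Prod.mk.injEq] at h
  obtain ⟨_, h2, _, h4, h5, _⟩ := h
  subst h2; subst h4; subst h5; rfl

theorem ggr_coefficient_identity_second_form (α β γ : ℂ)
    (hαβ : ∀ n : ℤ, α + β ≠ (n : ℂ)) (hγ : ∀ n : ℤ, γ ≠ (n : ℂ)) (X Y Z : ℕ) :
    (∑' t : ℕ × ℕ × ℕ × ℕ × ℕ × ℕ,
      (fun (i j k l m n : ℕ) =>
        if i + l + m = X ∧ j + n = Y + m ∧ j + k + l = Z then
          (-1 : ℂ) ^ (i + j + k + l + m) *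
            (cpoch β (n : ℤ) * cpoch γ (n : ℤ) /
              ((n.factorial : ℂ) * cpoch (α + β) (n : ℤ))) *
            genBinom (-γ - (n : ℂ)) i * genBinom (-β - (n : ℂ)) j *
            genBinom (α + β + (n : ℂ) - 1) k * genBinom (γ - α) l *
            genBinom (n : ℂ) m
        else 0) t.1 t.2.1 t.2.2.1 t.2.2.2.1 t.2.2.2.2.1 t.2.2.2.2.2) =
    cpoch α (X : ℤ) * cpoch β (Y : ℤ) * cpoch (1 - γ) (Z : ℤ) *
        cpoch γ ((X : ℤ) + (Y : ℤ) - (Z : ℤ)) /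
      ((X.factorial : ℂ) * (Y.factorial : ℂ) * (Z.factorial : ℂ) *
        cpoch (α + β) ((X : ℤ) + (Y : ℤ) - (Z : ℤ))) := by
  rw [tsum_eq_sum (s := (idxT X Y Z).image (idxMap X Y Z))]
  · rw [Finset.sum_image (fun a _ b _ h => idxMap_inj X Y Z h)]
    set K : ℂ := (-1) ^ (Z + Y) * (cpoch (α + β) ((X : ℤ) + Y - Z))⁻¹ * risP β Y with hK
    have step1 : ∀ t ∈ idxT X Y Z,
        (fun (i j k l m n : ℕ) =>
        if i + l + m = X ∧ j + n = Y + m ∧ j + k + l = Z then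
          (-1 : ℂ) ^ (i + j + k + l + m) *
            (cpoch β (n : ℤ) * cpoch γ (n : ℤ) /
              ((n.factorial : ℂ) * cpoch (α + β) (n : ℤ))) *
            genBinom (-γ - (n : ℂ)) i * genBinom (-β - (n : ℂ)) j *
            genBinom (α + β + (n : ℂ) - 1) k * genBinom (γ - α) l *
            genBinom (n : ℂ) m
        else 0) (idxMap X Y Z t).1 (idxMap X Y Z t).2.1 (idxMap X Y Z t).2.2.1
          (idxMap X Y Z t).2.2.2.1 (idxMap X Y Z t).2.2.2.2.1 (idxMap X Y Z t).2.2.2.2.2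
        = K * (risP γ (X - t.1) / ((Z - t.1).factorial : ℂ) * genBinom (γ - α) t.1) *
          ((genBinom (-β - Y) t.2.1 *
            genBinom (α + β + X + Y - Z - 1) (X - t.1 - t.2.1)) *
          (genBinom ((Z - t.1 : ℕ) : ℂ) t.2.2 *
            genBinom (-γ - ((X - t.1 : ℕ) : ℂ)) (Y - t.2.2))) := by
      rintro ⟨l, m, j⟩ ht
      simp only [idxT, Finset.mem_sigma, Finset.mem_product, Finset.mem_filter,
        Finset.mem_range] at ht
      obtain ⟨h1, h2, h3, h4⟩ := ht
      refine (if_pos (show X - l - m + l + m = X ∧ j + (Y - j + m) = Y + m ∧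
        j + (Z - l - j) + l = Z by omega)).trans ?_
      simp only [idxMap]
      obtain ⟨i, hi⟩ : ∃ i, X = l + m + i := ⟨X - l - m, by omega⟩
      obtain ⟨k, hk⟩ : ∃ k, Z = l + j + k := ⟨Z - l - j, by omega⟩
      obtain ⟨y, hy⟩ : ∃ y, Y = j + y := ⟨Y - j, by omega⟩
      have e1 : X - l - m = i := by omega
      have e2 : X - l = m + i := by omega
      have e3 : Z - l - j = k := by omega
      have e4 : Z - l = j + k := by omega
      have e5 : Y - j = y := by omega
      rw [hK, e1, e2, e3, e4, e5, term_eq α β γ hαβ l m i j k y]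
      have e6 : (X : ℤ) + Y - Z = m + i + y - k := by
        rw [hi, hk, hy]; push_cast; ring
      have e7 : α + β + ((m + i : ℕ) : ℂ) + (y : ℂ) - k - 1 = α + β + X + Y - Z - 1 := by
        rw [hi, hk, hy]; push_cast; ring
      rw [e6, e7, ← hy, ← hk]
    rw [Finset.sum_congr rfl step1, idxT, Finset.sum_sigma]
    have step2 : ∀ l ∈ Finset.range (min X Z + 1),
        (∑ p ∈ (Finset.range (X - l + 1)) ×ˢ ((Finset.range (Y + 1)).filter (fun j => j ≤ Z - l)),
          K * (risP γ (X - l) / ((Z - l).factorial : ℂ) * genBinom (γ - α) l) *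
          ((genBinom (-β - Y) p.1 *
            genBinom (α + β + X + Y - Z - 1) (X - l - p.1)) *
          (genBinom ((Z - l : ℕ) : ℂ) p.2 *
            genBinom (-γ - ((X - l : ℕ) : ℂ)) (Y - p.2))))
        = (K * genBinom (-(γ + X - Z)) Y * cpoch γ ((X : ℤ) - Z)) *
          (genBinom (γ - α) l * genBinom (α + X - Z - 1) (X - l) *
            genBinom (γ + X - l - 1) (Z - l)) := by
      intro l hl
      have hl' : l ≤ min X Z := by have := Finset.mem_range.mp hl; omega
      have hX : l ≤ X := by omega
      have hZ : l ≤ Z := by omega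
      rw [← Finset.mul_sum, Finset.sum_product]
      dsimp only
      rw [← Finset.sum_mul_sum, vand]
      have ej : ∑ j ∈ (Finset.range (Y + 1)).filter (fun j => j ≤ Z - l),
          genBinom ((Z - l : ℕ) : ℂ) j * genBinom (-γ - ((X - l : ℕ) : ℂ)) (Y - j)
          = genBinom (-(γ + X - Z)) Y := by
        rw [Finset.sum_filter_of_ne, vand]
        · congr 1; push_cast [hX, hZ]; ring
        · intro j _ hj
          by_contra hlt
          apply hj
          rw [genBinom_nat, Nat.choose_eq_zero_of_lt (by omega)]
          simp
      rw [ej]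
      have e1 : -β - (Y : ℂ) + (α + β + X + Y - Z - 1) = α + X - Z - 1 := by ring
      have e2 : genBinom (γ + X - l - 1) (Z - l)
          = risP (γ + X - Z) (Z - l) / ((Z - l).factorial : ℂ) := by
        rw [← genBinom_ris]; congr 1; push_cast [hZ]; ring
      have e3 : risP γ (X - l) = cpoch γ ((X : ℤ) - Z) * risP (γ + X - Z) (Z - l) := by
        have := cpoch_add γ hγ ((X : ℤ) - Z) (Z - l)
        have e : (X : ℤ) - Z + ((Z - l : ℕ) : ℤ) = ((X - l : ℕ) : ℤ) := by omega
        rw [e, cpoch_nat] at this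
        rw [this]; push_cast; congr 2; ring
      rw [e1, e2, e3]
      ring
    rw [Finset.sum_congr rfl step2, ← Finset.mul_sum, saal, genBinom_ris, genBinom_neg]
    have e1 : γ - 1 = -(1 - γ) := by ring
    have e2 : cpoch γ ((X : ℤ) + Y - Z) = cpoch γ ((X : ℤ) - Z) * risP (γ + X - Z) Y := by
      have := cpoch_add γ hγ ((X : ℤ) - Z) Y
      have e : (X : ℤ) + Y - Z = (X : ℤ) - Z + Y := by ring
      rw [e, this]; push_cast; congr 2; ring
    rw [e1, genBinom_neg, e2, cpoch_nat, cpoch_nat, cpoch_nat, hK]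
    have n1 := cpoch_ne (α + β) hαβ ((X : ℤ) + Y - Z)
    have b1 := fact_ne X
    have b2 := fact_ne Y
    have b3 := fact_ne Z
    have sY := neg_one_sq_pow Y
    have sZ := neg_one_sq_pow Z
    calc _ = (((-1) ^ Y * (-1) ^ Y) * ((-1) ^ Z * (-1) ^ Z)) *
          (risP α X * risP β Y * risP (1 - γ) Z * (cpoch γ ((X : ℤ) - Z) * risP (γ + X - Z) Y) /
      ((X.factorial : ℂ) * (Y.factorial : ℂ) * (Z.factorial : ℂ) *
        cpoch (α + β) ((X : ℤ) + (Y : ℤ) - (Z : ℤ)))) := by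
          field_simp
          ring
      _ = _ := by rw [sY, sZ]; ring
  · rintro ⟨i, j, k, l, m, n⟩ ht
    simp only
    split_ifs with h
    · replace h : i + l + m = X ∧ j + n = Y + m ∧ j + k + l = Z := h
      obtain ⟨h1, h2, h3⟩ := h
      have hjY : Y < j := by
        by_contra hle
        apply ht
        refine Finset.mem_image.mpr ⟨⟨l, m, j⟩, ?_, ?_⟩
        · simp only [idxT, Finset.mem_sigma, Finset.mem_product, Finset.mem_filter,
            Finset.mem_range]
          omega
        · have a1 : X - l - m = i := by omega
          have a2 : Z - l - j = k := by omega
          have a3 : Y - j + m = n := by omega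
          change (X - l - m, j, Z - l - j, l, m, Y - j + m) = _
          rw [a1, a2, a3]
      rw [genBinom_nat n m, Nat.choose_eq_zero_of_lt (by omega)]
      simp
    · rfl
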